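/- Any $6 \times 6$ matrix over $\mathbb{Z}$ with $\{0,1\}$ entries, columns summing to $3$, whose first four columns are (up to row permutation) the exponent vectors of $x_1x_2x_3,\ x_1x_4x_5,\ x_2x_4x_6,\ x_3x_5x_6$, has even determinant. In particular such a matrix cannot have determinant $\pm 3$. -/

import Mathlib

/-- Any `6 × 6` `{0,1}` matrix with column sums `3` whose first four columns
are, up to row permutation, the exponent vectors of
`x₁x₂x₃, x₁x₄x₅, x₂x₄x₆, x₃x₅x₆` has even determinant; in particular its
determinant is not `±3`. -/
theorem even_det_special_pattern (A : Matrix (Fin 6) (Fin 6) ℤ)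
    (h01 : ∀ i j, A i j = 0 ∨ A i j = 1)
    (hcol : ∀ j, ∑ i, A i j = 3)
    (hσ : ∃ σ : Equiv.Perm (Fin 6),
      (∀ i, A (σ i) 0 = if i ∈ ({0, 1, 2} : Finset (Fin 6)) then 1 else 0) ∧
      (∀ i, A (σ i) 1 = if i ∈ ({0, 3, 4} : Finset (Fin 6)) then 1 else 0) ∧
      (∀ i, A (σ i) 2 = if i ∈ ({1, 3, 5} : Finset (Fin 6)) then 1 else 0) ∧
      (∀ i, A (σ i) 3 = if i ∈ ({2, 4, 5} : Finset (Fin 6)) then 1 else 0)) :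
    2 ∣ A.det ∧ A.det ≠ 3 ∧ A.det ≠ -3 := by
  obtain ⟨σ, h0, h1, h2, h3⟩ := hσ
  have key : (2 : ℤ) ∣ A.det := by
    have hz : (A.map (Int.castRingHom (ZMod 2))).det = 0 := by
      rw [← Matrix.exists_mulVec_eq_zero_iff]
      refine ⟨![1, 1, 1, 1, 0, 0], by decide, ?_⟩
      funext k
      obtain ⟨i, rfl⟩ := σ.surjective k
      simp only [Matrix.mulVec, dotProduct, Fin.sum_univ_six, Matrix.map_apply, h0, h1, h2, h3]
      fin_cases i <;> simp <;> decide
    have hd : ((A.det : ℤ) : ZMod 2) = 0 := by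
      have := RingHom.map_det (Int.castRingHom (ZMod 2)) A
      rw [RingHom.mapMatrix_apply, hz] at this
      simpa using this
    exact_mod_cast (ZMod.intCast_zmod_eq_zero_iff_dvd A.det 2).1 hd
  refine ⟨key, ?_, ?_⟩ <;> intro h <;> omega
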